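/- Let k be a field, m ≥ 2 a natural number, and A = k[t]/(t^m) the truncated polynomial k-algebra. Regard k as an A-module via the augmentation A → k sending t to 0. Then for every natural number n, the Ext group Ext^n_A(k, k), computed in the abelian category of A-modules, is a one-dimensional k-vector space. -/

import Mathlib

open Polynomial CategoryTheory

/-!
If multiplication by `s` and multiplication by `t` on `A` are exact in both orders, then
`⋯ ⟶ A --s--> A --t--> A --s--> A --t--> A` is a free resolution of any cyclic module `N` whose
generator has annihilator `(t)`. When `s` and `t` also annihilate `M`, applying `Hom_A(-, M)` kills
all differentials, so every `Ext^n_A(N, M)` is `Hom_A(A, M) ≅ M`. For `A = k[t]/(t^m)` take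
`s = t^(m-1)`, which is a multiple of `t` as soon as `m ≥ 2`.
-/

universe u

section PeriodicPresentation

variable {C : Type*} [Category* C] [Abelian C] {P X Y : C} {φ ψ : P ⟶ P} {π : P ⟶ X}

/-- Exactness of `⋯ --φ--> P --ψ--> P --φ--> P --ψ--> P --π--> X ⟶ 0`: the input for a
resolution of `X` of period two. -/
structure IsPeriodicPresentation (φ ψ : P ⟶ P) (π : P ⟶ X) : Prop where
  φ_comp_ψ : φ ≫ ψ = 0
  ψ_comp_φ : ψ ≫ φ = 0
  ψ_comp_π : ψ ≫ π = 0
  exact_φ_ψ : (ShortComplex.mk φ ψ φ_comp_ψ).Exact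
  exact_ψ_φ : (ShortComplex.mk ψ φ ψ_comp_φ).Exact
  exact_ψ_π : (ShortComplex.mk ψ π ψ_comp_π).Exact
  epi_π : Epi π

namespace IsPeriodicPresentation

/-- The complex `⋯ --φ--> P --ψ--> P --φ--> P --ψ--> P` of the presentation, which ends in
degree `0`. -/
noncomputable abbrev complex (h : IsPeriodicPresentation φ ψ π) : ChainComplex C ℕ :=
  HomologicalComplex.alternatingConst P h.φ_comp_ψ h.ψ_comp_φ
    fun _ _ => ComplexShape.down_nat_odd_add

/-- The augmentation of the periodic complex, given by `π` in degree `0`. -/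
noncomputable def augmentation (h : IsPeriodicPresentation φ ψ π) :
    h.complex ⟶ (ChainComplex.single₀ C).obj X :=
  (h.complex.toSingle₀Equiv X).symm ⟨π, h.ψ_comp_π⟩

lemma augmentation_f_zero (h : IsPeriodicPresentation φ ψ π) : h.augmentation.f 0 = π :=
  ChainComplex.toSingle₀Equiv_symm_apply_f_zero (C := h.complex) π h.ψ_comp_π

lemma exactAt_complex_succ (h : IsPeriodicPresentation φ ψ π) (n : ℕ) :
    h.complex.ExactAt (n + 1) := by
  rw [HomologicalComplex.exactAt_iff' _ (n + 2) (n + 1) n (by simp) (by simp)]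
  rcases Nat.even_or_odd (n + 1) with hn | hn
  · exact ShortComplex.exact_of_iso
      (HomologicalComplex.alternatingConstScIsoEven P h.φ_comp_ψ h.ψ_comp_φ
        (fun _ _ => ComplexShape.down_nat_odd_add) rfl rfl hn).symm h.exact_ψ_φ
  · exact ShortComplex.exact_of_iso
      (HomologicalComplex.alternatingConstScIsoOdd P h.φ_comp_ψ h.ψ_comp_φ
        (fun _ _ => ComplexShape.down_nat_odd_add) rfl rfl hn).symm h.exact_φ_ψ

lemma quasiIso_augmentation (h : IsPeriodicPresentation φ ψ π) : QuasiIso h.augmentation where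
  quasiIsoAt n := by
    cases n with
    | zero =>
      rw [ChainComplex.quasiIsoAt₀_iff, ShortComplex.quasiIso_iff_of_zeros' _ rfl rfl rfl]
      simpa [h.augmentation_f_zero] using! And.intro h.exact_ψ_π h.epi_π
    | succ n =>
      rw [quasiIsoAt_iff_exactAt' (hL := ChainComplex.exactAt_succ_single_obj ..)]
      exact h.exactAt_complex_succ n

/-- The projective resolution of `X` of period two. -/
noncomputable def resolution [Projective P] (h : IsPeriodicPresentation φ ψ π) :
    ProjectiveResolution X where
  complex := h.complex
  projective _ := ‹Projective P›
  π := h.augmentation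
  quasiIso := h.quasiIso_augmentation

lemma complex_d_comp_eq_zero (h : IsPeriodicPresentation φ ψ π)
    (hφ : ∀ f : P ⟶ Y, φ ≫ f = 0) (hψ : ∀ f : P ⟶ Y, ψ ≫ f = 0) (i j : ℕ) (f : P ⟶ Y) :
    h.complex.d i j ≫ f = 0 := by
  simp only [HomologicalComplex.alternatingConst_d]
  split_ifs
  exacts [hφ f, hψ f, Limits.zero_comp]

variable {R : Type*} [Ring R] [Linear R C]

lemma linearYonedaObj_d_eq_zero (h : IsPeriodicPresentation φ ψ π)
    (hφ : ∀ f : P ⟶ Y, φ ≫ f = 0) (hψ : ∀ f : P ⟶ Y, ψ ≫ f = 0) (i j : ℕ) :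
    (h.complex.linearYonedaObj R Y).d i j = 0 := by
  ext f
  exact h.complex_d_comp_eq_zero hφ hψ j i f

/-- `Ext^n(X, Y) ≅ Hom(P, Y)` when `Hom(-, Y)` kills the differentials of the resolution. -/
noncomputable def extIso [EnoughProjectives C] [Projective P]
    (h : IsPeriodicPresentation φ ψ π)
    (hφ : ∀ f : P ⟶ Y, φ ≫ f = 0) (hψ : ∀ f : P ⟶ Y, ψ ≫ f = 0) (n : ℕ) :
    ((Ext R C n).obj (Opposite.op X)).obj Y ≅ ModuleCat.of R (P ⟶ Y) :=
  h.resolution.isoExt n Y ≪≫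
    (ShortComplex.HomologyData.ofZeros ((h.complex.linearYonedaObj R Y).sc n)
      (h.linearYonedaObj_d_eq_zero hφ hψ _ _)
      (h.linearYonedaObj_d_eq_zero hφ hψ _ _)).left.homologyIso

end IsPeriodicPresentation

end PeriodicPresentation

section Modules

lemma isPeriodicPresentation_ofHom {A : Type*} [Ring A] {M N : Type u} [AddCommGroup M]
    [Module A M] [AddCommGroup N] [Module A N] {f g : N →ₗ[A] N} {p : N →ₗ[A] M}
    (hfg : Function.Exact f g) (hgf : Function.Exact g f) (hgp : Function.Exact g p)
    (hp : Function.Surjective p) :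
    IsPeriodicPresentation (ModuleCat.ofHom f) (ModuleCat.ofHom g) (ModuleCat.ofHom p) where
  φ_comp_ψ := ModuleCat.hom_ext hfg.linearMap_comp_eq_zero
  ψ_comp_φ := ModuleCat.hom_ext hgf.linearMap_comp_eq_zero
  ψ_comp_π := ModuleCat.hom_ext hgp.linearMap_comp_eq_zero
  exact_φ_ψ := (ShortComplex.ShortExact.moduleCat_exact_iff_function_exact _).2 hfg
  exact_ψ_φ := (ShortComplex.ShortExact.moduleCat_exact_iff_function_exact _).2 hgf
  exact_ψ_π := (ShortComplex.ShortExact.moduleCat_exact_iff_function_exact _).2 hgp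
  epi_π := (ModuleCat.epi_iff_surjective _).2 hp

variable {A : Type u} [CommRing A] {M N : Type u} [AddCommGroup M] [Module A M]
  [AddCommGroup N] [Module A N]

lemma ofHom_mulLeft_comp_eq_zero {a : A} (ha : ∀ x : M, a • x = 0)
    (f : ModuleCat.of A A ⟶ ModuleCat.of A M) :
    ModuleCat.ofHom (LinearMap.mulLeft A a) ≫ f = 0 := by
  ext
  calc f.hom (a • (1 : A)) = a • f.hom 1 := map_smul _ _ _
    _ = 0 := ha _

variable (k : Type*) [Field k] [Algebra k A] [Module k M] [IsScalarTower k A M]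

/-- `Hom_A(A, M) ≅ M` as `k`-vector spaces, by evaluation at `1`. The `k`-structure on the left is
the one of the `k`-linear category of `A`-modules, which acts on `M` through `k → A`. -/
def regularHomEquiv :
    letI : Module k (ModuleCat.of A A ⟶ ModuleCat.of A M) := Linear.homModule _ _
    (ModuleCat.of A A ⟶ ModuleCat.of A M) ≃ₗ[k] M :=
  letI : Module k (ModuleCat.of A A ⟶ ModuleCat.of A M) := Linear.homModule _ _
  { toFun f := f.hom (1 : A)
    invFun x := ModuleCat.ofHom (LinearMap.toSpanSingleton A M x)
    map_add' _ _ := rfl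
    map_smul' c f := algebraMap_smul A c (f.hom (1 : A))
    left_inv f := by
      ext
      exact one_smul A _
    right_inv x := one_smul A x }

/-- `Ext^n_A(N, M) ≅ M` when `N ≅ A/(t)`, multiplication by `s` and by `t` on `A` are exact in
both orders, and `s` and `t` annihilate `M`. -/
noncomputable def extEquivOfExactMulLeft {s t : A} {p : A →ₗ[A] N}
    (hst : Function.Exact (LinearMap.mulLeft A s) (LinearMap.mulLeft A t))
    (hts : Function.Exact (LinearMap.mulLeft A t) (LinearMap.mulLeft A s))
    (htp : Function.Exact (LinearMap.mulLeft A t) p) (hp : Function.Surjective p)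
    (hs : ∀ x : M, s • x = 0) (ht : ∀ x : M, t • x = 0) (n : ℕ) :
    ((Ext k (ModuleCat.{u} A) n).obj (Opposite.op (ModuleCat.of A N))).obj
      (ModuleCat.of A M) ≃ₗ[k] M :=
  have : Projective (ModuleCat.of A A) :=
    ModuleCat.projective_of_free (Module.Basis.singleton Unit A)
  ((isPeriodicPresentation_ofHom hst hts htp hp).extIso (ofHom_mulLeft_comp_eq_zero hs)
    (ofHom_mulLeft_comp_eq_zero ht) n).toLinearEquiv ≪≫ₗ regularHomEquiv k

end Modules

lemma exact_mulLeft_mk_of_mul_eq {R : Type*} [CommRing R] {a b c : R} (hb : IsLeftRegular b)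
    (hab : b * a = c) :
    Function.Exact
      (LinearMap.mulLeft (R ⧸ Ideal.span {c}) (Ideal.Quotient.mk (Ideal.span {c}) a))
      (LinearMap.mulLeft (R ⧸ Ideal.span {c}) (Ideal.Quotient.mk (Ideal.span {c}) b)) := by
  intro y
  obtain ⟨f, rfl⟩ := Ideal.Quotient.mk_surjective y
  simp only [LinearMap.mulLeft_apply, Set.mem_range]
  constructor
  · intro hf
    rw [← map_mul, Ideal.Quotient.eq_zero_iff_dvd, ← hab, hb.dvd_cancel_left] at hf
    obtain ⟨g, rfl⟩ := hf
    exact ⟨Ideal.Quotient.mk _ g, (map_mul _ a g).symm⟩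
  · rintro ⟨z, hz⟩
    rw [← hz, ← mul_assoc, ← map_mul, hab, Ideal.Quotient.mk_singleton_self, zero_mul]

lemma pow_smul_eq_zero_of_smul_eq_zero {R M : Type*} [Monoid R] [AddMonoid M]
    [DistribMulAction R M] {r : R} {x : M} (hr : r • x = 0) {n : ℕ} (hn : n ≠ 0) :
    r ^ n • x = 0 := by
  rw [← pow_sub_one_mul hn, mul_smul, hr, smul_zero]

/-- The truncated polynomial algebra `k[t]/(t^m)`. -/
abbrev TruncatedPolynomial (k : Type*) [CommRing k] (m : ℕ) : Type _ :=
  k[X] ⧸ Ideal.span {(X : k[X]) ^ m}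

namespace TruncatedPolynomial

variable {k : Type*} [CommRing k] {m : ℕ}

variable (k m) in
/-- The class of the variable in `k[t]/(t^m)`. -/
noncomputable abbrev t : TruncatedPolynomial k m := Ideal.Quotient.mk _ X

lemma exact_mulLeft_t_pow {a b : ℕ} (hab : b + a = m) :
    Function.Exact (LinearMap.mulLeft (TruncatedPolynomial k m) (t k m ^ a))
      (LinearMap.mulLeft (TruncatedPolynomial k m) (t k m ^ b)) := by
  simp only [t, ← map_pow]
  exact exact_mulLeft_mk_of_mul_eq (isRegular_X_pow b).left (by rw [← pow_add, hab])

/-- The augmentation `k[t]/(t^m) → k`, `t ↦ 0`. -/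
noncomputable def augmentation (hm : m ≠ 0) : TruncatedPolynomial k m →+* k :=
  Ideal.Quotient.lift _ (evalRingHom 0) fun f hf => by
    obtain ⟨g, rfl⟩ := Ideal.mem_span_singleton.1 hf
    simp [hm]

lemma augmentation_mk (hm : m ≠ 0) (f : k[X]) :
    augmentation (m := m) hm (Ideal.Quotient.mk _ f) = f.eval 0 :=
  rfl

lemma augmentation_algebraMap (hm : m ≠ 0) (c : k) :
    augmentation hm (algebraMap k (TruncatedPolynomial k m) c) = c :=
  eval_C

lemma augmentation_surjective (hm : m ≠ 0) :
    Function.Surjective (augmentation (k := k) hm) :=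
  fun c => ⟨_, augmentation_algebraMap hm c⟩

lemma augmentation_t (hm : m ≠ 0) : augmentation hm (t k m) = 0 :=
  eval_X

lemma exact_mulLeft_t_augmentation (hm : m ≠ 0) :
    Function.Exact (LinearMap.mulLeft (TruncatedPolynomial k m) (t k m)) (augmentation hm) := by
  intro y
  constructor
  · intro hy
    obtain ⟨f, rfl⟩ := Ideal.Quotient.mk_surjective y
    obtain ⟨g, rfl⟩ : X ∣ f := by
      rwa [X_dvd_iff, coeff_zero_eq_eval_zero, ← augmentation_mk hm]
    exact ⟨Ideal.Quotient.mk _ g, (map_mul _ X g).symm⟩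
  · rintro ⟨z, rfl⟩
    rw [LinearMap.mulLeft_apply, map_mul, augmentation_t, zero_mul]

/-- `k` as a module over `k[t]/(t^m)` via the augmentation. -/
noncomputable abbrev augmentationModule (hm : m ≠ 0) : Module (TruncatedPolynomial k m) k :=
  Module.compHom k (augmentation hm)

lemma isScalarTower_augmentationModule (hm : m ≠ 0) :
    letI := augmentationModule (k := k) hm
    IsScalarTower k (TruncatedPolynomial k m) k :=
  letI := augmentationModule (k := k) hm
  .of_algebraMap_smul (A := TruncatedPolynomial k m) (M := k) fun c x =>
    congr_arg (· * x) (augmentation_algebraMap hm c)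

lemma t_smul_augmentationModule (hm : m ≠ 0) (x : k) :
    letI := augmentationModule (k := k) hm
    t k m • x = 0 :=
  (congr_arg (· * x) (augmentation_t hm)).trans (zero_mul x)

/-- The augmentation as a `k[t]/(t^m)`-linear map. -/
noncomputable def augmentationLinearMap (hm : m ≠ 0) :
    letI := augmentationModule (k := k) hm
    TruncatedPolynomial k m →ₗ[TruncatedPolynomial k m] k :=
  letI := augmentationModule (k := k) hm
  { toFun := augmentation hm
    map_add' := map_add _
    map_smul' := map_mul _ }

end TruncatedPolynomial

open TruncatedPolynomial in
theorem ext_truncated_polynomial_one_dimensional_general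
    {k : Type u} [Field k] {m : ℕ} (hm : 2 ≤ m) {M : Type u} [AddCommGroup M] [Module k M]
    [Module (TruncatedPolynomial k m) M] [IsScalarTower k (TruncatedPolynomial k m) M]
    (ht : ∀ x : M, t k m • x = 0) (n : ℕ) :
    letI := augmentationModule (k := k) (show m ≠ 0 by lia)
    Nonempty ((((Ext k (ModuleCat.{u} (TruncatedPolynomial k m)) n).obj
      (Opposite.op (ModuleCat.of _ k))).obj (ModuleCat.of _ M)) ≃ₗ[k] M) := by
  have hm₀ : m ≠ 0 := by lia
  let := augmentationModule (k := k) hm₀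
  have exact_pow_t := exact_mulLeft_t_pow (k := k) (show 1 + (m - 1) = m by lia)
  have exact_t_pow := exact_mulLeft_t_pow (k := k) (show m - 1 + 1 = m by lia)
  rw [pow_one] at exact_pow_t exact_t_pow
  exact ⟨extEquivOfExactMulLeft k (p := augmentationLinearMap hm₀) exact_pow_t exact_t_pow
    (exact_mulLeft_t_augmentation hm₀) (augmentation_surjective hm₀)
    (fun x => pow_smul_eq_zero_of_smul_eq_zero (ht x) (by lia)) ht n⟩

/-- For `A = k[t]/(t^m)` with `m ≥ 2` and `k` viewed as an `A`-module via the
augmentation `t ↦ 0`, the Ext group `Ext^n_A(k, k)` in the abelian category of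
`A`-modules is a one-dimensional `k`-vector space for every `n`. -/
theorem ext_truncated_polynomial_one_dimensional
    (k : Type) [Field k] (m : ℕ) (hm : 2 ≤ m) (n : ℕ) :
    letI A := Polynomial k ⧸ Ideal.span {(X : Polynomial k) ^ m}
    letI φ : A →+* k := Ideal.Quotient.lift (Ideal.span {(X : Polynomial k) ^ m})
      (Polynomial.evalRingHom (0 : k))
      (fun a ha => by
        refine (Ideal.span_le.mpr ?_ : _ ≤ RingHom.ker (Polynomial.evalRingHom (0 : k))) ha
        rintro x hx
        rw [Set.mem_singleton_iff] at hx
        subst hx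
        simp [RingHom.mem_ker, zero_pow, show m ≠ 0 by omega])
    letI : Module A k := Module.compHom k φ
    Module.finrank k
      (((Ext k (ModuleCat A) n).obj (Opposite.op (ModuleCat.of A k))).obj
        (ModuleCat.of A k)) = 1 := by
  have hm₀ : m ≠ 0 := by lia
  let := TruncatedPolynomial.augmentationModule (k := k) hm₀
  have := TruncatedPolynomial.isScalarTower_augmentationModule (k := k) hm₀
  obtain ⟨e⟩ := ext_truncated_polynomial_one_dimensional_general hm (M := k)
    (TruncatedPolynomial.t_smul_augmentationModule hm₀) n
  exact e.finrank_eq.trans (Module.finrank_self k)
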